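/- Let T_2 be the tree on the 7 vertices {w, x, y, z, u, a, b} with edges wx, xy, yz, zu, ua, ub (a path on 4 vertices with a 3-star appended by one of its leaves onto the endpoint z). Then γ^ID(T_2) = 5 = (2/3)·7 + 1/3. -/

import Mathlib

open SimpleGraph

/-- The closed neighborhood `N[v]` of a vertex `v` in `G`. -/
def closedNbhd {V : Type*} (G : SimpleGraph V) (v : V) : Set V :=
  insert v (G.neighborSet v)

/-- `C` is an identifying code of `G`: it dominates every vertex and the
closed neighborhoods of distinct vertices intersect `C` differently. -/
def IsIDCode {V : Type*} (G : SimpleGraph V) (C : Set V) : Prop :=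
  (∀ v, (closedNbhd G v ∩ C).Nonempty) ∧
  ∀ u w : V, u ≠ w → closedNbhd G u ∩ C ≠ closedNbhd G w ∩ C

/-- The identification number `γ^ID(G)`: the minimum size of an identifying code. -/
noncomputable def idNum {V : Type*} [Fintype V] (G : SimpleGraph V) : ℕ :=
  sInf {k | ∃ C : Set V, C.ncard = k ∧ IsIDCode G C}

/-- `G` is identifiable (closed-twin-free). -/
def Identifiable {V : Type*} (G : SimpleGraph V) : Prop :=
  ∀ u w : V, u ≠ w → closedNbhd G u ≠ closedNbhd G w

/-- The maximum degree of a finite graph `G`. -/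
noncomputable def maxDeg {V : Type*} [Fintype V] (G : SimpleGraph V) : ℕ :=
  Finset.univ.sup fun v => (G.neighborSet v).ncard

/-- `S` is a dominating set of `G`. -/
def IsDomSet {V : Type*} (G : SimpleGraph V) (S : Set V) : Prop :=
  ∀ v, (closedNbhd G v ∩ S).Nonempty

/-- The domination number `γ(G)`. -/
noncomputable def domNum {V : Type*} [Fintype V] (G : SimpleGraph V) : ℕ :=
  sInf {k | ∃ S : Set V, S.ncard = k ∧ IsDomSet G S}

/-- The star `K_{1,k}`: vertex `0` is adjacent to each of the `k` other vertices. -/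
def starGraph (k : ℕ) : SimpleGraph (Fin (k + 1)) :=
  SimpleGraph.fromRel fun a _ => a = 0

/-- The graph obtained from `G'` by appending a star with `k` extra leaves onto the
vertex `v`: we add a new universal vertex `u = Sum.inr none` adjacent to `v`,
and `k` new leaves `Sum.inr (some i)` adjacent to `u` (so the star has `k + 1`
leaves in total, one of which is identified with `v`, i.e. a `(k+1)`-star is
appended by one of its leaves onto `v`). -/
def appendStar {V : Type*} (G' : SimpleGraph V) (v : V) (k : ℕ) :
    SimpleGraph (V ⊕ Option (Fin k)) :=
  SimpleGraph.fromRel fun a b =>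
    (∃ x y, a = Sum.inl x ∧ b = Sum.inl y ∧ G'.Adj x y) ∨
    (a = Sum.inl v ∧ b = Sum.inr none) ∨
    (∃ i, a = Sum.inr none ∧ b = Sum.inr (some i))

/-- The tree `T₂`: a path `w x y z` (vertices `0 1 2 3`) with a 3-star appended by one
of its leaves onto `z`; `u = 4`, `a = 5`, `b = 6`. -/
def T2graph : SimpleGraph (Fin 7) :=
  SimpleGraph.fromEdgeSet {s(0, 1), s(1, 2), s(2, 3), s(3, 4), s(4, 5), s(4, 6)}

/-!
Write `w x y z u a b` for the vertices `0, …, 6` and let `C` be an identifying code. A code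
separates a leaf from its support vertex only through another neighbour of the support vertex, so
`y ∈ C`. Separating `x` from `y` puts `w` or `z` in `C`, and separating `y` from `z` puts `x` or `u`
in `C`. If both `a` and `b` are in `C`, this makes five vertices. If one of these two leaves is
missing, then the other one, `u` and `z` are all in `C`, and dominating `w` adds `w` or `x`, so
there are again five. The code `{x, y, z, u, a}` attains the bound.
-/

variable {V : Type*} {G : SimpleGraph V} {C : Set V} {a b u v w x y z : V}

theorem mem_closedNbhd : v ∈ closedNbhd G u ↔ v = u ∨ G.Adj u v :=
  Iff.rfl

theorem isIDCode_of_closedNbhd_inter_eq {f : V → Set V} (hf : ∀ v, closedNbhd G v ∩ C = f v)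
    (hne : ∀ v, (f v).Nonempty) (hinj : Function.Injective f) : IsIDCode G C := by
  obtain rfl : (fun v ↦ closedNbhd G v ∩ C) = f := funext hf
  exact ⟨hne, fun _ _ huw ↦ hinj.ne huw⟩

namespace IsIDCode

theorem idNum_eq_ncard [Fintype V] (hC : IsIDCode G C)
    (hmin : ∀ D, IsIDCode G D → C.ncard ≤ D.ncard) : idNum G = C.ncard := by
  refine IsLeast.csInf_eq ⟨⟨C, rfl, hC⟩, ?_⟩
  rintro _ ⟨D, rfl, hD⟩
  exact hmin D hD

theorem symmDiff_closedNbhd_inter_nonempty (hC : IsIDCode G C) (huv : u ≠ v) :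
    (symmDiff (closedNbhd G u) (closedNbhd G v) ∩ C).Nonempty := by
  rw [Set.inter_symmDiff_distrib_right, Set.symmDiff_nonempty]
  exact hC.2 u v huv

theorem mem_or_mem_of_neighborSet_eq (hC : IsIDCode G C) (hab : a ≠ b)
    (h : G.neighborSet a = G.neighborSet b) : a ∈ C ∨ b ∈ C := by
  obtain ⟨c, hc, hcC⟩ := hC.symmDiff_closedNbhd_inter_nonempty hab
  have hadj : G.Adj a c ↔ G.Adj b c := Set.ext_iff.1 h c
  simp only [Set.mem_symmDiff, mem_closedNbhd] at hc
  grind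

theorem leaf_mem_or_support_mem (hC : IsIDCode G C) (ha : G.neighborSet a = {u}) :
    a ∈ C ∨ u ∈ C := by
  obtain ⟨c, hc, hcC⟩ := hC.1 a
  rw [closedNbhd, ha] at hc
  rcases hc with rfl | rfl
  exacts [.inl hcC, .inr hcC]

theorem exists_adj_support_ne_leaf (hC : IsIDCode G C) (ha : G.neighborSet a = {u}) :
    ∃ c ∈ C, G.Adj u c ∧ c ≠ a := by
  have hadj (c : V) : G.Adj a c ↔ c = u := Set.ext_iff.1 ha c
  have hau : G.Adj a u := (hadj u).2 rfl
  obtain ⟨c, hc, hcC⟩ := hC.symmDiff_closedNbhd_inter_nonempty hau.ne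
  simp only [Set.mem_symmDiff, mem_closedNbhd, hadj] at hc
  have hua : G.Adj u a := hau.symm
  grind

theorem mem_of_neighborSet_support_eq_pair (hC : IsIDCode G C) (hw : G.neighborSet w = {x})
    (hx : G.neighborSet x = {w, y}) : y ∈ C := by
  obtain ⟨c, hcC, hxc, hcw⟩ := hC.exists_adj_support_ne_leaf hw
  have hc : c ∈ ({w, y} : Set V) := hx ▸ hxc
  exact hc.resolve_left hcw ▸ hcC

theorem mem_or_mem_of_neighborSet_eq_pair (hC : IsIDCode G C) (hx : G.neighborSet x = {w, y})
    (hy : G.neighborSet y = {x, z}) : w ∈ C ∨ z ∈ C := by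
  have hxy : G.Adj x y := hx.ge (.inr rfl)
  obtain ⟨c, hc, hcC⟩ := hC.symmDiff_closedNbhd_inter_nonempty hxy.ne
  simp only [closedNbhd, hx, hy, Set.mem_symmDiff, Set.mem_insert_iff,
    Set.mem_singleton_iff] at hc
  grind

theorem neighbor_support_leaf_mem_of_leaf_notMem (hC : IsIDCode G C) (hab : a ≠ b)
    (ha : G.neighborSet a = {u}) (hb : G.neighborSet b = {u})
    (hu : G.neighborSet u = {z, a, b}) (haC : a ∉ C) :
    z ∈ C ∧ u ∈ C ∧ b ∈ C := by
  refine ⟨?_, (hC.leaf_mem_or_support_mem ha).resolve_left haC,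
    (hC.mem_or_mem_of_neighborSet_eq hab (ha.trans hb.symm)).resolve_left haC⟩
  obtain ⟨c, hcC, huc, hcb⟩ := hC.exists_adj_support_ne_leaf hb
  have hc : c ∈ ({z, a, b} : Set V) := hu ▸ huc
  rcases hc with rfl | rfl | rfl
  exacts [hcC, absurd hcC haC, absurd rfl hcb]

theorem leaves_mem_or_neighbor_support_leaf_mem (hC : IsIDCode G C) (hab : a ≠ b)
    (ha : G.neighborSet a = {u}) (hb : G.neighborSet b = {u})
    (hu : G.neighborSet u = {z, a, b}) :
    (a ∈ C ∧ b ∈ C) ∨ (z ∈ C ∧ u ∈ C ∧ (a ∈ C ∨ b ∈ C)) := by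
  by_cases haC : a ∈ C
  · by_cases hbC : b ∈ C
    · exact .inl ⟨haC, hbC⟩
    · rw [Set.pair_comm] at hu
      obtain ⟨hzC, huC, -⟩ := hC.neighbor_support_leaf_mem_of_leaf_notMem hab.symm hb ha hu hbC
      exact .inr ⟨hzC, huC, .inl haC⟩
  · obtain ⟨hzC, huC, hbC⟩ := hC.neighbor_support_leaf_mem_of_leaf_notMem hab ha hb hu haC
    exact .inr ⟨hzC, huC, .inr hbC⟩

end IsIDCode

theorem T2graph_neighborSet (v : Fin 7) :
    T2graph.neighborSet v =
      (![{1}, {0, 2}, {1, 3}, {2, 4}, {3, 5, 6}, {4}, {4}] : Fin 7 → Set (Fin 7)) v := by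
  ext c
  rw [mem_neighborSet, T2graph, fromEdgeSet_adj]
  fin_cases v <;> fin_cases c <;> simp

theorem isIDCode_T2graph : IsIDCode T2graph {1, 2, 3, 4, 5} := by
  let trace : Fin 7 → Finset (Fin 7) :=
    ![{1}, {1, 2}, {1, 2, 3}, {2, 3, 4}, {3, 4, 5}, {4, 5}, {4}]
  refine isIDCode_of_closedNbhd_inter_eq (f := fun v ↦ trace v) (fun v ↦ ?_) (fun v ↦ ?_) ?_
  · ext c
    rw [closedNbhd, T2graph_neighborSet]
    fin_cases v <;> fin_cases c <;> simp [trace]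
  · rw [Finset.coe_nonempty]
    revert v
    decide
  · exact Finset.coe_injective.comp (by decide : Function.Injective trace)

theorem exists_card_eq_five_subset_of_isIDCode_T2graph {C : Set (Fin 7)}
    (hC : IsIDCode T2graph C) : ∃ S : Finset (Fin 7), S.card = 5 ∧ ↑S ⊆ C := by
  have N := T2graph_neighborSet
  have hy : 2 ∈ C := hC.mem_of_neighborSet_support_eq_pair (N 0) (N 1)
  have hwx : 0 ∈ C ∨ 1 ∈ C := hC.leaf_mem_or_support_mem (N 0)
  have hwz : 0 ∈ C ∨ 3 ∈ C := hC.mem_or_mem_of_neighborSet_eq_pair (N 1) (N 2)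
  have hxu : 1 ∈ C ∨ 4 ∈ C := hC.mem_or_mem_of_neighborSet_eq_pair (N 2) (N 3)
  rcases hC.leaves_mem_or_neighbor_support_leaf_mem (by decide) (N 5) (N 6) (N 4) with
    ⟨ha, hb⟩ | ⟨hz, hu, hab⟩
  · obtain ⟨p, hp, hpC⟩ : ∃ p, (p = 0 ∨ p = 3) ∧ p ∈ C := by simpa using hwz
    obtain ⟨q, hq, hqC⟩ : ∃ q, (q = 1 ∨ q = 4) ∧ q ∈ C := by simpa using hxu
    refine ⟨{p, q, 2, 5, 6}, ?_, by simp [Set.insert_subset_iff, *]⟩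
    rcases hp with rfl | rfl <;> rcases hq with rfl | rfl <;> rfl
  · obtain ⟨p, hp, hpC⟩ : ∃ p, (p = 0 ∨ p = 1) ∧ p ∈ C := by simpa using hwx
    obtain ⟨q, hq, hqC⟩ : ∃ q, (q = 5 ∨ q = 6) ∧ q ∈ C := by simpa using hab
    refine ⟨{p, q, 2, 3, 4}, ?_, by simp [Set.insert_subset_iff, *]⟩
    rcases hp with rfl | rfl <;> rcases hq with rfl | rfl <;> rfl

theorem five_le_ncard_of_isIDCode_T2graph {C : Set (Fin 7)} (hC : IsIDCode T2graph C) :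
    5 ≤ C.ncard := by
  obtain ⟨S, hS, hSC⟩ := exists_card_eq_five_subset_of_isIDCode_T2graph hC
  rw [← hS, ← Set.ncard_coe_finset S]
  exact Set.ncard_le_ncard hSC

/-- `γ^ID(T₂) = 5 = (2/3)·7 + 1/3`. -/
theorem stmt_7 : idNum T2graph = 5 ∧ (idNum T2graph : ℝ) = 2 / 3 * 7 + 1 / 3 := by
  have hcard : ({1, 2, 3, 4, 5} : Set (Fin 7)).ncard = 5 := by
    rw [Set.ncard_eq_toFinset_card']
    rfl
  have hidNum : idNum T2graph = 5 := by
    rw [← hcard]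
    exact isIDCode_T2graph.idNum_eq_ncard fun D hD ↦
      hcard.trans_le (five_le_ncard_of_isIDCode_T2graph hD)
  refine ⟨hidNum, ?_⟩
  rw [hidNum]
  norm_num
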